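/- arXiv:2102.00493 — 3 statements merged into one kernel-verified Lean document; each statement's English description precedes it below -/
import Mathlib

section
/- For every integer r ≥ 2, the set of real numbers α ∈ [0,1) that are not simply normal in base r is a Lebesgue null set; equivalently, almost every α ∈ [0,1) (with respect to Lebesgue measure) is simply normal in base r. -/
/-!
The digits of `α` in base `r` form the itinerary of `α` mod `1` under the map `y ↦ r • y` of the
circle, which preserves Haar measure. The leading digit of `y` is independent of `r • y`: the points
with leading digit `b` form an arc of length `1 / r` which `y ↦ r • y` stretches affinely onto the
whole circle. Hence distinct digits are independent, and Etemadi's strong law, which needs only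
pairwise independence, gives the digit frequencies almost everywhere.
-/

open MeasureTheory Filter Finset

/-- The `j`-th digit (after the radix point) of `α` in base `r`: `⌊r^j * α⌋ mod r`. -/
noncomputable def digit (r : ℕ) (α : ℝ) (j : ℕ) : ℤ := ⌊(r : ℝ) ^ j * α⌋ % r

/-- `digitCount r b n α` counts the indices `j` with `1 ≤ j ≤ n` and `digit r α j = b`. -/
noncomputable def digitCount (r b n : ℕ) (α : ℝ) : ℕ :=
  ((Finset.Icc 1 n).filter (fun j => digit r α j = (b : ℤ))).card

/-- `α` is simply normal in base `r`. -/
def SimplyNormal (r : ℕ) (α : ℝ) : Prop :=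
  ∀ b < r, Tendsto (fun n : ℕ => (digitCount r b n α : ℝ) / n) atTop (nhds (1 / r))

/-- `α` is normal in base `r`: `r^m * α` is simply normal in base `r^n`
for all `n ≥ 1` and all `m ≥ 0`. -/
def NormalBase (r : ℕ) (α : ℝ) : Prop :=
  ∀ n : ℕ, 1 ≤ n → ∀ m : ℕ, SimplyNormal (r ^ n) ((r : ℝ) ^ m * α)

section Independence

open ProbabilityTheory
open scoped Function Topology

variable {Ω Ω' β γ : Type*} {mΩ : MeasurableSpace Ω} {mΩ' : MeasurableSpace Ω'}
  [MeasurableSpace β] [MeasurableSpace γ] {μ : Measure Ω} {ν : Measure Ω'}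

theorem identDistrib_comp_measurePreserving {f : Ω → β} {φ : Ω' → Ω}
    (hf : AEMeasurable f μ) (hφ : MeasurePreserving φ ν μ) :
    IdentDistrib (f ∘ φ) f ν μ where
  aemeasurable_fst := hf.comp_quasiMeasurePreserving hφ.quasiMeasurePreserving
  aemeasurable_snd := hf
  map_eq := by
    rw [← AEMeasurable.map_map_of_aemeasurable (hφ.map_eq.symm ▸ hf) hφ.aemeasurable, hφ.map_eq]

theorem indepFun_comp_measurePreserving {f : Ω → β} {g : Ω → γ} {φ : Ω' → Ω}
    (hfg : IndepFun f g μ) (hf : AEMeasurable f μ) (hg : AEMeasurable g μ)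
    (hφ : MeasurePreserving φ ν μ) :
    IndepFun (f ∘ φ) (g ∘ φ) ν := by
  refine indepFun_iff_measure_inter_preimage_eq_mul.2 fun s t hs ht ↦ ?_
  have hfs : NullMeasurableSet (f ⁻¹' s) μ := hf.nullMeasurableSet_preimage hs
  have hgt : NullMeasurableSet (g ⁻¹' t) μ := hg.nullMeasurableSet_preimage ht
  rw [Set.preimage_comp, Set.preimage_comp, ← Set.preimage_inter,
    hφ.measure_preimage (hfs.inter hgt), hφ.measure_preimage hfs, hφ.measure_preimage hgt,
    hfg.measure_inter_preimage_eq_mul s t hs ht]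

theorem indepFun_indicator_const_of_indepSet [Zero β] [Zero γ] {s t : Set Ω}
    (hst : IndepSet s t μ) (b : β) (c : γ) :
    IndepFun (s.indicator fun _ ↦ b) (t.indicator fun _ ↦ c) μ :=
  indep_of_indep_of_le_left
    (indep_of_indep_of_le_right ((IndepSet_iff_Indep s t μ).1 hst)
      (MeasurableSpace.comap_indicator_const_le_generateFrom_singleton t c))
    (MeasurableSpace.comap_indicator_const_le_generateFrom_singleton s b)

theorem pairwise_indepFun_comp_iterate {T : Ω → Ω} {f : Ω → β} (hT : MeasurePreserving T μ μ)
    (hf : AEMeasurable f μ) (hindep : ∀ k ≠ 0, IndepFun f (f ∘ T^[k]) μ) :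
    Pairwise ((fun g h ↦ IndepFun g h μ) on fun n ↦ f ∘ T^[n]) := by
  have indep_of_lt {i j : ℕ} (hij : i < j) : IndepFun (f ∘ T^[i]) (f ∘ T^[j]) μ := by
    have hj : T^[j] = T^[j - i] ∘ T^[i] := by rw [← Function.iterate_add, Nat.sub_add_cancel hij.le]
    rw [hj, ← Function.comp_assoc]
    exact indepFun_comp_measurePreserving (hindep _ (Nat.sub_ne_zero_of_lt hij)) hf
      (hf.comp_quasiMeasurePreserving (hT.iterate _).quasiMeasurePreserving) (hT.iterate i)
  intro i j hij
  rcases hij.lt_or_gt with h | h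
  · exact indep_of_lt h
  · exact (indep_of_lt h).symm

theorem ae_tendsto_birkhoffAverage_of_indepFun_iterate {E : Type*} [NormedAddCommGroup E]
    [NormedSpace ℝ E] [CompleteSpace E] [MeasurableSpace E] [BorelSpace E] {T : Ω → Ω} {f : Ω → E}
    (hT : MeasurePreserving T μ μ) (hf : Integrable f μ)
    (hindep : ∀ k ≠ 0, IndepFun f (f ∘ T^[k]) μ) :
    ∀ᵐ ω ∂μ, Tendsto (fun n ↦ birkhoffAverage ℝ T f n ω) atTop (𝓝 (∫ x, f x ∂μ)) :=
  strong_law_ae (fun n ↦ f ∘ T^[n]) hf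
    (pairwise_indepFun_comp_iterate hT hf.aemeasurable hindep)
    fun n ↦ identDistrib_comp_measurePreserving hf.aemeasurable (hT.iterate n)

theorem ae_tendsto_birkhoffAverage_indicator [IsProbabilityMeasure μ] {T : Ω → Ω} {s : Set Ω}
    (hT : MeasurePreserving T μ μ) (hs : MeasurableSet s)
    (hindep : ∀ k ≠ 0, IndepSet s (T^[k] ⁻¹' s) μ) :
    ∀ᵐ ω ∂μ, Tendsto (fun n ↦ birkhoffAverage ℝ T (s.indicator 1) n ω) atTop
      (𝓝 (μ.real s)) := by
  rw [← integral_indicator_one hs]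
  exact ae_tendsto_birkhoffAverage_of_indepFun_iterate hT
    ((integrable_const (1 : ℝ)).indicator hs)
    fun k hk ↦ indepFun_indicator_const_of_indepSet (hindep k hk) 1 1

end Independence

section Circle

variable {T : ℝ}

theorem nsmul_coe_addCircle (n : ℕ) (x : ℝ) :
    n • (x : AddCircle T) = ((n * x : ℝ) : AddCircle T) := by
  rw [← AddCircle.coe_nsmul, nsmul_eq_mul]

variable [hT : Fact (0 < T)]

theorem addCircle_volume_eq_volume_preimage_inter_Ico (t : ℝ) {U : Set (AddCircle T)}
    (hU : MeasurableSet U) :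
    volume U = volume (((↑) : ℝ → AddCircle T) ⁻¹' U ∩ Set.Ico t (t + T)) := by
  rw [AddCircle.add_projection_respects_measure T t hU]
  exact measure_congr ((ae_eq_refl _).inter Ico_ae_eq_Ioc.symm)

theorem ae_coe_of_ae_addCircle {p : AddCircle T → Prop} (hp : ∀ᵐ y, p y) :
    ∀ᵐ x : ℝ, p x := by
  have hperiod (n : ℤ) : ∀ᵐ x : ℝ ∂volume.restrict (Set.Ioc (n • T) ((n + 1) • T)), p x := by
    rw [add_smul, one_smul]
    exact (AddCircle.measurePreserving_mk T (n • T)).quasiMeasurePreserving.ae hp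
  simpa only [iUnion_Ioc_zsmul hT.out, Measure.restrict_univ] using
    (ae_restrict_iUnion_iff _ fun x : ℝ ↦ p x).2 hperiod

theorem measurePreserving_nsmul_addCircle {n : ℕ} (hn : n ≠ 0) :
    MeasurePreserving (fun y : AddCircle T ↦ n • y) := by
  simpa only [natCast_zsmul] using
    Measure.measurePreserving_zsmul (volume : Measure (AddCircle T)) (Int.natCast_ne_zero.2 hn)

instance isProbabilityMeasure_volume_unitAddCircle :
    IsProbabilityMeasure (volume : Measure UnitAddCircle) :=
  ⟨UnitAddCircle.measure_univ⟩

end Circle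

section Digits

open ProbabilityTheory
open scoped Topology

variable {r : ℕ}

theorem measurable_digit (r j : ℕ) : Measurable fun α ↦ digit r α j :=
  (measurable_of_countable fun m : ℤ ↦ m % r).comp
    (Int.measurable_floor.comp (measurable_const_mul _))

theorem periodic_digit (r : ℕ) {j : ℕ} (hj : j ≠ 0) :
    Function.Periodic (fun α ↦ digit r α j) 1 := by
  intro α
  have hfloor : ⌊(r : ℝ) ^ j * (α + 1)⌋ = ⌊(r : ℝ) ^ j * α⌋ + (r : ℤ) ^ j := by
    rw [mul_add_one]
    exact_mod_cast Int.floor_add_natCast ((r : ℝ) ^ j * α) (r ^ j)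
  simp only [digit]
  rw [hfloor, Int.add_emod, Int.emod_eq_zero_of_dvd (dvd_pow_self _ hj), add_zero, Int.emod_emod]

theorem digit_pow_mul (r i j : ℕ) (α : ℝ) : digit r ((r : ℝ) ^ i * α) j = digit r α (j + i) := by
  rw [digit, digit, ← mul_assoc, ← pow_add]

theorem mem_Ico_and_digit_one_eq_iff {b : ℕ} (hb : b < r) (α : ℝ) :
    α ∈ Set.Ico (0 : ℝ) 1 ∧ digit r α 1 = b ↔ (r : ℝ) * α ∈ Set.Ico (b : ℝ) (b + 1) := by
  have hr : (0 : ℝ) < r := by exact_mod_cast hb.pos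
  have mem_Ico_iff : α ∈ Set.Ico (0 : ℝ) 1 ↔ ⌊(r : ℝ) * α⌋ ∈ Set.Ico (0 : ℤ) r := by
    simp only [Set.mem_Ico, Int.floor_nonneg, Int.floor_lt, Int.cast_natCast,
      mul_nonneg_iff_of_pos_left hr, mul_lt_iff_lt_one_right hr]
  have floor_eq_iff : ⌊(r : ℝ) * α⌋ = b ↔ (r : ℝ) * α ∈ Set.Ico (b : ℝ) (b + 1) := by
    simp only [Int.floor_eq_iff, Int.cast_natCast, Set.mem_Ico]
  rw [mem_Ico_iff, ← floor_eq_iff, digit, pow_one]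
  constructor
  · rintro ⟨⟨hnonneg, hlt⟩, hmod⟩
    rwa [Int.emod_eq_of_lt hnonneg hlt] at hmod
  · intro hfloor
    rw [hfloor]
    have hb' : (b : ℤ) < r := by exact_mod_cast hb
    exact ⟨⟨b.cast_nonneg, hb'⟩, Int.emod_eq_of_lt b.cast_nonneg hb'⟩

/-- The arc of points of the circle `ℝ / ℤ` whose leading digit in base `r` is `b`; the orbit of `α`
under `y ↦ r • y` visits it at time `j` exactly when digit `j + 1` of `α` is `b`. Defined by lifting
the `1`-periodic function `digit r · 1`. -/
def digitArc (r b : ℕ) : Set UnitAddCircle :=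
  {y | (periodic_digit r one_ne_zero).lift y = b}

theorem coe_mem_digitArc {b : ℕ} {α : ℝ} :
    (α : UnitAddCircle) ∈ digitArc r b ↔ digit r α 1 = b :=
  Iff.rfl

theorem measurableSet_digitArc (r b : ℕ) : MeasurableSet (digitArc r b) :=
  measurableSet_quotient.2 (measurable_digit r 1 (measurableSet_singleton (b : ℤ)))

theorem iterate_nsmul_coe_mem_digitArc {b j : ℕ} {α : ℝ} :
    (fun y ↦ r • y)^[j] (α : UnitAddCircle) ∈ digitArc r b ↔ digit r α (j + 1) = b := by
  rw [smul_iterate_apply, nsmul_coe_addCircle, Nat.cast_pow, coe_mem_digitArc, digit_pow_mul,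
    add_comm]

theorem volume_digitArc_inter_preimage_nsmul {b : ℕ} (hb : b < r) {U : Set UnitAddCircle}
    (hU : MeasurableSet U) :
    volume (digitArc r b ∩ (fun y ↦ r • y) ⁻¹' U) = (r : ENNReal)⁻¹ * volume U := by
  have hr : r ≠ 0 := Nat.ne_zero_of_lt hb
  have hpreimage : ((↑) : ℝ → UnitAddCircle) ⁻¹' (digitArc r b ∩ (fun y ↦ r • y) ⁻¹' U)
      ∩ Set.Ico 0 (0 + 1)
      = ((r : ℝ) * ·) ⁻¹' (((↑) : ℝ → UnitAddCircle) ⁻¹' U ∩ Set.Ico (b : ℝ) (b + 1)) := by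
    ext x
    simp only [zero_add, Set.mem_inter_iff, Set.mem_preimage, nsmul_coe_addCircle, coe_mem_digitArc,
      ← mem_Ico_and_digit_one_eq_iff hb]
    tauto
  have hpre : MeasurableSet ((fun y : UnitAddCircle ↦ r • y) ⁻¹' U) :=
    (measurePreserving_nsmul_addCircle hr).measurable hU
  rw [addCircle_volume_eq_volume_preimage_inter_Ico 0 ((measurableSet_digitArc r b).inter hpre),
    hpreimage, Real.volume_preimage_mul_left (Nat.cast_ne_zero.2 hr),
    ← addCircle_volume_eq_volume_preimage_inter_Ico b hU, abs_inv, Nat.abs_cast,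
    ENNReal.ofReal_inv_of_pos (Nat.cast_pos.2 hb.pos), ENNReal.ofReal_natCast]

theorem volume_digitArc {b : ℕ} (hb : b < r) : volume (digitArc r b) = (r : ENNReal)⁻¹ := by
  simpa using volume_digitArc_inter_preimage_nsmul hb MeasurableSet.univ

theorem indepSet_digitArc_preimage_nsmul {b : ℕ} (hb : b < r) {U : Set UnitAddCircle}
    (hU : MeasurableSet U) :
    IndepSet (digitArc r b) ((fun y ↦ r • y) ⁻¹' U) := by
  have hr : MeasurePreserving (fun y : UnitAddCircle ↦ r • y) :=
    measurePreserving_nsmul_addCircle (Nat.ne_zero_of_lt hb)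
  rw [indepSet_iff_measure_inter_eq_mul (measurableSet_digitArc r b)
    (hr.measurable hU) volume, volume_digitArc_inter_preimage_nsmul hb hU, volume_digitArc hb,
    hr.measure_preimage hU.nullMeasurableSet]

theorem birkhoffAverage_indicator_digitArc (r b n : ℕ) (α : ℝ) :
    birkhoffAverage ℝ (fun y ↦ r • y) ((digitArc r b).indicator (1 : UnitAddCircle → ℝ)) n α
      = digitCount r b n α / n := by
  classical
  have hsum : birkhoffSum (fun y ↦ r • y) ((digitArc r b).indicator (1 : UnitAddCircle → ℝ)) n α
      = (digitCount r b n α : ℝ) := by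
    simp only [birkhoffSum, Set.indicator_apply, iterate_nsmul_coe_mem_digitArc, Pi.one_apply,
      digitCount, Finset.natCast_card_filter]
    rw [Finset.range_eq_Ico,
      Finset.sum_Ico_add' (fun j ↦ if digit r α j = (b : ℤ) then (1 : ℝ) else 0)]
    rfl
  rw [birkhoffAverage, hsum, smul_eq_mul, inv_mul_eq_div]

theorem ae_tendsto_digitCount_div {b : ℕ} (hb : b < r) :
    ∀ᵐ α : ℝ, Tendsto (fun n : ℕ ↦ (digitCount r b n α : ℝ) / n) atTop (𝓝 (1 / r)) := by
  have hindep (k : ℕ) (hk : k ≠ 0) : IndepSet (digitArc r b)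
      ((fun y : UnitAddCircle ↦ r • y)^[k] ⁻¹' digitArc r b) := by
    obtain ⟨j, rfl⟩ := Nat.exists_eq_succ_of_ne_zero hk
    exact indepSet_digitArc_preimage_nsmul hb
      (((measurePreserving_nsmul_addCircle (Nat.ne_zero_of_lt hb)).iterate j).measurable
        (measurableSet_digitArc r b))
  have hcircle := ae_coe_of_ae_addCircle <| ae_tendsto_birkhoffAverage_indicator
    (measurePreserving_nsmul_addCircle (Nat.ne_zero_of_lt hb)) (measurableSet_digitArc r b) hindep
  simpa only [birkhoffAverage_indicator_digitArc, measureReal_def, volume_digitArc hb,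
    ENNReal.toReal_inv, ENNReal.toReal_natCast, one_div] using hcircle

end Digits

theorem almost_all_simply_normal_general (r : ℕ) : ∀ᵐ α : ℝ, SimplyNormal r α := by
  filter_upwards [ae_all_iff.2 fun b : Fin r ↦ ae_tendsto_digitCount_div b.isLt] with α hα b hb
  exact hα ⟨b, hb⟩

/-- Almost every number in `Set.Ico 0 1` is simply normal in base `r`. -/
theorem almost_all_simply_normal (r : ℕ) (hr : 2 ≤ r) :
    volume {α : ℝ | α ∈ Set.Ico (0 : ℝ) 1 ∧ ¬ SimplyNormal r α} = 0 :=
  measure_mono_null (fun _ hα ↦ hα.2) (almost_all_simply_normal_general r)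
end

section
/- Let r ≥ 2 be an integer and let α be a real number that is normal in base r. Then for every finite word w = b_1 b_2 … b_k of digits in {0,…,r−1} (k ≥ 1), the number p_{w,n,α,r} of positions j ≥ 1 with j + k − 1 ≤ n such that α_{j,r} = b_1, α_{j+1,r} = b_2, …, α_{j+k−1,r} = b_k satisfies lim_{n→∞} p_{w,n,α,r}/n = 1/r^k. -/
open MeasureTheory Filter Finset

/-!
The word `w` of length `k` ends at position `e` of the base-`r` expansion of `α` exactly when
`⌊r ^ e * α⌋ % r ^ k` is the integer with base-`r` digits `w`. Writing `e = k * q + m` with `m < k`,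
this residue is the `q`-th base-`r ^ k` digit of `r ^ m * α`. Hence the occurrences of `w` split
into `k` classes according to `m`, and each class is counted by a digit count in base `r ^ k`, of
relative frequency `1 / r ^ k`, along a progression of density `1 / k`.
-/

theorem emod_mul_eq_add_mul_ediv_emod {b c : ℤ} (hb : 0 < b) (hc : 0 < c) (z : ℤ) :
    z % (b * c) = z % b + b * (z / b % c) := by
  have digit_nonneg := Int.emod_nonneg z hb.ne'
  have digit_lt := Int.emod_lt_of_pos z hb
  have quot_nonneg := Int.emod_nonneg (z / b) hc.ne'
  have quot_lt := Int.emod_lt_of_pos (z / b) hc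
  have expansion : z = z % b + b * (z / b % c) + b * c * (z / b / c) := by
    linear_combination -Int.emod_add_mul_ediv z b - b * Int.emod_add_mul_ediv (z / b) c
  conv_lhs => rw [expansion, Int.add_mul_emod_self_left]
  exact Int.emod_eq_of_lt (by positivity) (by nlinarith)

theorem emod_mul_eq_add_mul_iff {b c d : ℤ} (hc : 0 < c) (hd : 0 ≤ d) (hdb : d < b) (z v : ℤ) :
    z % (b * c) = d + b * v ↔ z / b % c = v ∧ z % b = d := by
  have hb : 0 < b := hd.trans_lt hdb
  rw [emod_mul_eq_add_mul_ediv_emod hb hc]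
  refine ⟨fun h => ?_, fun ⟨hquot, hdigit⟩ => by rw [hquot, hdigit]⟩
  have hdigit : z % b = d := by
    simpa [Int.emod_eq_of_lt hd hdb] using congrArg (· % b) h
  rw [hdigit, add_right_inj] at h
  exact ⟨mul_left_cancel₀ hb.ne' h, hdigit⟩

/-- The value in base `r` of the word `w 0, …, w (k - 1)`, most significant digit first
(`Nat.ofDigits` reads its list from the least significant digit). -/
def wordValue (r : ℕ) (w : ℕ → ℕ) (k : ℕ) : ℕ :=
  Nat.ofDigits r ((List.range k).map w).reverse

theorem wordValue_zero (r : ℕ) (w : ℕ → ℕ) : wordValue r w 0 = 0 := by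
  simp [wordValue]

theorem wordValue_succ (r : ℕ) (w : ℕ → ℕ) (k : ℕ) :
    wordValue r w (k + 1) = w k + r * wordValue r w k := by
  simp [wordValue, List.range_succ, Nat.ofDigits_cons]

theorem wordValue_lt_pow {r : ℕ} (hr : 1 < r) {w : ℕ → ℕ} {k : ℕ} (hw : ∀ i < k, w i < r) :
    wordValue r w k < r ^ k := by
  simpa [wordValue] using
    Nat.ofDigits_lt_base_pow_length (l := ((List.range k).map w).reverse) hr (by simpa using hw)

theorem floor_pow_succ_mul_ediv {r : ℕ} (hr : 0 < r) (α : ℝ) (n : ℕ) :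
    ⌊(r : ℝ) ^ (n + 1) * α⌋ / (r : ℤ) = ⌊(r : ℝ) ^ n * α⌋ := by
  rw [← Int.floor_div_natCast, pow_succ']
  congr 1
  field_simp

theorem forall_digit_eq_iff_floor_emod_eq_wordValue {r : ℕ} (α : ℝ) (j : ℕ) {w : ℕ → ℕ} {k : ℕ}
    (hw : ∀ i < k, w i < r) :
    (∀ i < k, digit r α (j + 1 + i) = (w i : ℤ)) ↔
      ⌊(r : ℝ) ^ (j + k) * α⌋ % (r : ℤ) ^ k = (wordValue r w k : ℤ) := by
  induction k with
  | zero => simp [wordValue_zero]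
  | succ k ih =>
    have last_lt : w k < r := hw k k.lt_succ_self
    have hr : 0 < r := last_lt.pos
    rw [Nat.forall_lt_succ_right, ih fun i hi => hw i (hi.trans k.lt_succ_self), wordValue_succ,
      pow_succ']
    push_cast
    rw [emod_mul_eq_add_mul_iff (by positivity) (by positivity) (by exact_mod_cast last_lt),
      ← add_assoc, floor_pow_succ_mul_ediv hr, digit, add_right_comm]

theorem digit_pow_pow_mul (r : ℕ) (α : ℝ) (k m q : ℕ) :
    digit (r ^ k) ((r : ℝ) ^ m * α) q = ⌊(r : ℝ) ^ (k * q + m) * α⌋ % (r : ℤ) ^ k := by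
  rw [digit, Nat.cast_pow, Nat.cast_pow, ← pow_mul, ← mul_assoc, ← pow_add]

theorem card_filter_Icc_shift (p : ℕ → Prop) [DecidablePred p] (l n : ℕ) :
    #{j ∈ Icc 1 n | j + l ≤ n ∧ p (j + l)} = #{e ∈ Icc (l + 1) n | p e} := by
  refine card_nbij' (· + l) (· - l) ?_ ?_ ?_ ?_ <;> intro x hx <;>
    simp only [coe_filter, mem_Icc, Set.mem_ofPred_eq] at hx ⊢
  · exact ⟨by omega, hx.2.2⟩
  · rw [Nat.sub_add_cancel (by omega)]
    exact ⟨by omega, by omega, hx.2⟩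
  · omega
  · omega

theorem card_word_occurrences_eq_card_floor_emod {r : ℕ} (α : ℝ) {w : ℕ → ℕ} {k : ℕ} (hk : 1 ≤ k)
    (hw : ∀ i < k, w i < r) (n : ℕ) :
    #{j ∈ Icc 1 n | j + k - 1 ≤ n ∧ ∀ i < k, digit r α (j + i) = (w i : ℤ)} =
      #{e ∈ Icc k n | ⌊(r : ℝ) ^ e * α⌋ % (r : ℤ) ^ k = (wordValue r w k : ℤ)} := by
  obtain ⟨l, rfl⟩ := Nat.exists_eq_add_of_le' hk
  rw [← card_filter_Icc_shift _ l n]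
  refine congrArg card (filter_congr fun j hj => and_congr_right fun _ => ?_)
  obtain ⟨i, rfl⟩ := Nat.exists_eq_add_of_le' (mem_Icc.mp hj).1
  rw [forall_digit_eq_iff_floor_emod_eq_wordValue α i hw, add_right_comm, add_assoc]

theorem card_filter_Icc_eq_sum_residues (p : ℕ → Prop) [DecidablePred p] {k : ℕ} (hk : 0 < k)
    (n : ℕ) :
    #{e ∈ Icc k n | p e} = ∑ m ∈ range k, #{q ∈ Icc 1 ((n - m) / k) | p (k * q + m)} := by
  rw [card_eq_sum_card_fiberwise (f := (· % k)) (t := range k)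
    fun e _ => by simpa using Nat.mod_lt e hk]
  refine sum_congr rfl fun m hm => ?_
  have hmk : m < k := mem_range.mp hm
  refine card_nbij' (· / k) (k * · + m) ?_ ?_ ?_ ?_ <;> intro x hx <;>
    simp only [coe_filter, mem_filter, mem_Icc, Set.mem_ofPred_eq] at hx ⊢
  · obtain ⟨⟨⟨hkx, hxn⟩, hpx⟩, rfl⟩ := hx
    rw [Nat.div_add_mod]
    exact ⟨⟨Nat.div_pos hkx hk, (Nat.le_div_iff_mul_le hk).mpr
      (Nat.le_sub_of_add_le ((Nat.div_add_mod' x k).trans_le hxn))⟩, hpx⟩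
  · obtain ⟨⟨hx1, hxn⟩, hpx⟩ := hx
    have lower : k * 1 ≤ k * x := Nat.mul_le_mul_left k hx1
    have upper : x * k ≤ n - m := (Nat.le_div_iff_mul_le hk).mp hxn
    rw [mul_comm] at upper
    exact ⟨⟨by omega, hpx⟩, by rw [Nat.mul_add_mod, Nat.mod_eq_of_lt hmk]⟩
  · rw [← hx.2, Nat.div_add_mod]
  · rw [Nat.mul_add_div hk, Nat.div_eq_of_lt hmk, add_zero]

theorem tendsto_sub_div_div_atTop (k m : ℕ) :
    Tendsto (fun n : ℕ => (((n - m) / k : ℕ) : ℝ) / n) atTop (nhds (1 / k)) := by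
  rw [← tendsto_add_atTop_iff_nat m]
  have floor_ratio : Tendsto (fun n : ℕ => ((n / k : ℕ) : ℝ) / n) atTop (nhds (1 / k)) := by
    refine ((tendsto_nat_floor_mul_div_atTop (R := ℝ) (a := 1 / k) (by positivity)).comp
      tendsto_natCast_atTop_atTop).congr fun n => ?_
    rw [Function.comp_apply, one_div_mul_eq_div, Nat.floor_div_eq_div]
  have shift_ratio := tendsto_natCast_div_add_atTop (m : ℝ)
  rw [← mul_one (1 / (k : ℝ))]
  refine (floor_ratio.mul shift_ratio).congr' ?_
  filter_upwards [eventually_ne_atTop 0] with n hn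
  rw [Nat.add_sub_cancel, Nat.cast_add, div_mul_div_cancel₀ (Nat.cast_ne_zero.mpr hn)]

theorem tendsto_comp_sub_div_div {a : ℕ → ℝ} {L : ℝ}
    (ha : Tendsto (fun n : ℕ => a n / n) atTop (nhds L)) {k : ℕ} (hk : 0 < k) (m : ℕ) :
    Tendsto (fun n : ℕ => a ((n - m) / k) / n) atTop (nhds (L * (1 / k))) := by
  have quot_atTop : Tendsto (fun n : ℕ => (n - m) / k) atTop atTop :=
    (Nat.tendsto_div_const_atTop hk.ne').comp (tendsto_sub_atTop_nat m)
  refine ((ha.comp quot_atTop).mul (tendsto_sub_div_div_atTop k m)).congr' ?_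
  filter_upwards [quot_atTop.eventually_ne_atTop 0] with n hn
  exact div_mul_div_cancel₀ (Nat.cast_ne_zero.mpr hn)

theorem tendsto_card_filter_Icc_div_of_residues {p : ℕ → Prop} [DecidablePred p] {k : ℕ}
    (hk : 0 < k) {L : ℝ}
    (h : ∀ m < k, Tendsto (fun n : ℕ => (#{q ∈ Icc 1 n | p (k * q + m)} : ℝ) / n) atTop (nhds L)) :
    Tendsto (fun n : ℕ => (#{e ∈ Icc k n | p e} : ℝ) / n) atTop (nhds L) := by
  have sum_limit : ∑ _m ∈ range k, L * (1 / k) = L := by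
    rw [sum_const, card_range, nsmul_eq_mul]
    field_simp
  simp_rw [card_filter_Icc_eq_sum_residues p hk, Nat.cast_sum, sum_div]
  rw [← sum_limit]
  exact tendsto_finsetSum _ fun m hm => tendsto_comp_sub_div_div (h m (mem_range.mp hm)) hk m

theorem word_frequency_general {r : ℕ} (hr : 1 < r) {α : ℝ} {k : ℕ} (hk : 1 ≤ k)
    (hα : ∀ m < k, SimplyNormal (r ^ k) ((r : ℝ) ^ m * α)) {w : ℕ → ℕ} (hw : ∀ i < k, w i < r) :
    Tendsto
      (fun n : ℕ =>
        (#{j ∈ Icc 1 n | j + k - 1 ≤ n ∧ ∀ i < k, digit r α (j + i) = (w i : ℤ)} : ℝ) / n)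
      atTop (nhds (1 / (r : ℝ) ^ k)) := by
  simp_rw [card_word_occurrences_eq_card_floor_emod α hk hw]
  refine tendsto_card_filter_Icc_div_of_residues hk fun m hm => ?_
  simpa only [digitCount, digit_pow_pow_mul, Nat.cast_pow] using
    hα m hm (wordValue r w k) (wordValue_lt_pow hr hw)

/-- If `α` is normal in base `r`, then every `r`-word `w` of length `k ≥ 1` occurs
among the first `n` digits of `α` with asymptotic frequency `1 / r ^ k`. -/
theorem word_frequency (r : ℕ) (hr : 2 ≤ r) (α : ℝ) (hα : NormalBase r α)
    (k : ℕ) (hk : 1 ≤ k) (w : ℕ → ℕ) (hw : ∀ i < k, w i < r) :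
    Tendsto
      (fun n : ℕ =>
        (((Finset.Icc 1 n).filter
            (fun j => j + k - 1 ≤ n ∧ ∀ i < k, digit r α (j + i) = (w i : ℤ))).card : ℝ) / n)
      atTop (nhds (1 / (r : ℝ) ^ k)) := by
  exact word_frequency_general hr hk (fun m _ => hα k hk m) hw
end

section
/- Let n ≥ 1 and s ≥ 1 be integers, set r = s + 1, and define f_4 as the fourth iterate of the operator g ↦ x·∂g/∂x − y·∂g/∂y applied to f_0(x,y) = (x^s + y)^n. Then at the point x = r^{−1/s}, y = (r−1)/r one has f_4(x,y) = 3(r−1)^2·n^2 + (r^3 − 7r^2 + 12r − 6)·n. -/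
open Finset

/-- The operator sending `g` to the function `(x, y) ↦ x * ∂g/∂x - y * ∂g/∂y`. -/
noncomputable def eulerOp (f : ℝ → ℝ → ℝ) : ℝ → ℝ → ℝ :=
  fun x y => x * deriv (fun t => f t y) x - y * deriv (fun t => f x t) y

/-!
On polynomials `eulerOp` is the derivation `D = X ∂/∂X - Y ∂/∂Y`, and at the given point
`u = X ^ s + Y` satisfies `u = 1` and `D u = 0`. Since `exp (t D)` substitutes
`(e ^ t x, e ^ (-t) y)` for `(x, y)`, the values of `D ^ k u` there are the moments of a centred
random variable which is `s` with probability `x ^ s = 1 / r` and `-1` with probability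
`y = s / r`, and those of `D ^ k (u ^ n)` are the moments of a sum of `n` independent copies of it.
The fourth moment of such a sum is `n μ₄ + 3 n (n - 1) μ₂ ^ 2`, and here `μ₂ = s` and
`μ₄ = s (s ^ 2 - s + 1)`.
-/

open MvPolynomial

section Derivation

variable {R A B : Type*} [CommSemiring R] [CommSemiring A] [Algebra R A] [CommRing B]
  (D : Derivation R A A)

lemma derivation_iterate_two_mul (a b : A) :
    D^[2] (a * b) = D^[2] a * b + 2 * (D a * D b) + a * D^[2] b := by
  simp only [Function.iterate_succ_apply', Function.iterate_zero_apply, map_add,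
    Derivation.leibniz, smul_eq_mul]
  ring

lemma derivation_iterate_four_mul (a b : A) :
    D^[4] (a * b) = D^[4] a * b + 4 * (D^[3] a * D b) + 6 * (D^[2] a * D^[2] b) +
      4 * (D a * D^[3] b) + a * D^[4] b := by
  simp only [Function.iterate_succ_apply', Function.iterate_zero_apply, map_add,
    Derivation.leibniz, smul_eq_mul]
  ring

variable {D} {φ : A →+* B} {u : A}

lemma map_derivation_pow_eq_zero (hDu : φ (D u) = 0) (n : ℕ) : φ (D (u ^ n)) = 0 := by
  simp [Derivation.leibniz_pow, hDu]

lemma map_derivation_iterate_two_pow (hu : φ u = 1) (hDu : φ (D u) = 0) (n : ℕ) :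
    φ (D^[2] (u ^ n)) = n * φ (D^[2] u) := by
  induction n with
  | zero => simp
  | succ n ih =>
    rw [pow_succ, derivation_iterate_two_mul]
    simp only [map_add, map_mul, map_pow, ih, hu, hDu]
    push_cast
    ring

lemma map_derivation_iterate_four_pow (hu : φ u = 1) (hDu : φ (D u) = 0) (n : ℕ) :
    φ (D^[4] (u ^ n)) = n * φ (D^[4] u) + 3 * (n * (n - 1)) * φ (D^[2] u) ^ 2 := by
  induction n with
  | zero => simp
  | succ n ih =>
    rw [pow_succ, derivation_iterate_four_mul]
    simp only [map_add, map_mul, map_pow, map_ofNat, ih, hu, hDu,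
      map_derivation_pow_eq_zero hDu, map_derivation_iterate_two_pow hu hDu]
    push_cast
    ring

end Derivation

lemma hasDerivAt_eval_update {σ 𝕜 : Type*} [DecidableEq σ] [NontriviallyNormedField 𝕜]
    (p : MvPolynomial σ 𝕜) (x : σ → 𝕜) (i : σ) (t : 𝕜) :
    HasDerivAt (fun t => eval (Function.update x i t) p)
      (eval (Function.update x i t) (pderiv i p)) t := by
  induction p using MvPolynomial.induction_on with
  | C a => simpa using hasDerivAt_const t a
  | add p q hp hq =>
    simp only [map_add]
    exact hp.add hq
  | mul_X p j hp =>
    have hX := hasDerivAt_pi.1 (hasDerivAt_update x i t) j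
    have hsingle : eval (Function.update x i t) (pderiv i (X j)) =
        Pi.single (M := fun _ => 𝕜) i 1 j := by
      simp [pderiv_X, Pi.single_apply, apply_ite]
    simp only [pderiv_mul, map_add, map_mul, eval_X, hsingle]
    exact hp.mul hX

/-- The Euler operator `X ∂/∂X - Y ∂/∂Y` as a derivation of `ℝ[X, Y]`, with `X 0` for `X` and `X 1`
for `Y`; it carries the iterates of `eulerOp` on polynomial functions over to algebra. -/
noncomputable def eulerDerivation :
    Derivation ℝ (MvPolynomial (Fin 2) ℝ) (MvPolynomial (Fin 2) ℝ) :=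
  (X 0 : MvPolynomial (Fin 2) ℝ) • pderiv 0 - (X 1 : MvPolynomial (Fin 2) ℝ) • pderiv 1

lemma eulerOp_eval (p : MvPolynomial (Fin 2) ℝ) :
    eulerOp (fun x y => eval ![x, y] p) = fun x y => eval ![x, y] (eulerDerivation p) := by
  funext x y
  have hx : HasDerivAt (fun t => eval ![t, y] p) (eval ![x, y] (pderiv 0 p)) x := by
    have hupdate (t : ℝ) : Function.update ![x, y] 0 t = ![t, y] := Fin.update_cons_zero ..
    simpa only [hupdate] using hasDerivAt_eval_update p ![x, y] 0 x
  have hy : HasDerivAt (fun t => eval ![x, t] p) (eval ![x, y] (pderiv 1 p)) y := by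
    have hupdate (t : ℝ) : Function.update ![x, y] 1 t = ![x, t] := by
      ext j
      fin_cases j <;> rfl
    simpa only [hupdate] using hasDerivAt_eval_update p ![x, y] 1 y
  simp [eulerOp, eulerDerivation, hx.deriv, hy.deriv]

lemma eulerOp_iterate_eval (k : ℕ) (p : MvPolynomial (Fin 2) ℝ) :
    eulerOp^[k] (fun x y => eval ![x, y] p) =
      fun x y => eval ![x, y] (eulerDerivation^[k] p) := by
  induction k with
  | zero => rfl
  | succ k ih => simp only [Function.iterate_succ_apply', ih, eulerOp_eval]

lemma eulerDerivation_iterate_X_pow_add_X (s k : ℕ) :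
    eulerDerivation^[k] (X 0 ^ s + X 1) = C ((s : ℝ) ^ k) * X 0 ^ s + C ((-1) ^ k) * X 1 := by
  have hX₀ : eulerDerivation (X 0) = X 0 := by
    simp [eulerDerivation]
  have hX : eulerDerivation (X 0 ^ s) = C (s : ℝ) * X 0 ^ s := by
    cases s with
    | zero => simp
    | succ s => simp [Derivation.leibniz_pow, hX₀, ← pow_succ]
  have hY : eulerDerivation (X 1) = -X 1 := by
    simp [eulerDerivation]
  induction k with
  | zero => simp
  | succ k ih =>
    simp only [Function.iterate_succ_apply', ih, map_add, C_mul', Derivation.map_smul, hX, hY]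
    simp only [smul_smul, smul_neg, ← neg_smul, pow_succ, mul_neg_one]

lemma eval_eulerDerivation_iterate_X_pow_add_X (s k : ℕ) (x y : ℝ) :
    eval ![x, y] (eulerDerivation^[k] (X 0 ^ s + X 1)) = s ^ k * x ^ s + (-1) ^ k * y := by
  rw [eulerDerivation_iterate_X_pow_add_X]
  simp

lemma eulerOp_iterate_four_pow {s : ℕ} {x y : ℝ} (hu : x ^ s + y = 1) (hDu : s * x ^ s = y)
    (n : ℕ) :
    eulerOp^[4] (fun x y => (x ^ s + y) ^ n) x y =
      n * (s ^ 4 * x ^ s + y) + 3 * (n * (n - 1)) * (s ^ 2 * x ^ s + y) ^ 2 := by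
  have hf : (fun x y : ℝ => (x ^ s + y) ^ n) =
      fun x y => eval ![x, y] ((X 0 ^ s + X 1 : MvPolynomial (Fin 2) ℝ) ^ n) := by
    simp
  have heval_u : eval ![x, y] (X 0 ^ s + X 1) = 1 := by simpa using hu
  have heval_Du : eval ![x, y] (eulerDerivation (X 0 ^ s + X 1)) = 0 := by
    have hone := eval_eulerDerivation_iterate_X_pow_add_X s 1 x y
    rw [Function.iterate_one] at hone
    linarith
  simp only [hf, eulerOp_iterate_eval]
  rw [map_derivation_iterate_four_pow heval_u heval_Du]
  simp only [eval_eulerDerivation_iterate_X_pow_add_X]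
  ring

lemma rpow_neg_one_div_natCast_pow {x : ℝ} (hx : 0 ≤ x) {s : ℕ} (hs : s ≠ 0) :
    (x ^ (-(1 / (s : ℝ)))) ^ s = x⁻¹ := by
  rw [Real.rpow_neg hx, inv_pow, one_div, Real.rpow_inv_natCast_pow hx hs]

/-- With `r = s + 1`, the fourth iterate of the Euler operator applied to
`(x ^ s + y) ^ n`, evaluated at `x = r ^ (-1/s)` (real rpow) and `y = (r - 1) / r`. -/
theorem eulerOp_four_value (n s : ℕ) (hn : 1 ≤ n) (hs : 1 ≤ s) (r : ℕ) (hr : r = s + 1) :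
    (eulerOp^[4] (fun x y => (x ^ s + y) ^ n))
        ((r : ℝ) ^ (-(1 / (s : ℝ)))) (((r : ℝ) - 1) / r) =
      3 * ((r : ℝ) - 1) ^ 2 * n ^ 2 +
        ((r : ℝ) ^ 3 - 7 * (r : ℝ) ^ 2 + 12 * (r : ℝ) - 6) * n := by
  have hx : ((r : ℝ) ^ (-(1 / (s : ℝ)))) ^ s = (r : ℝ)⁻¹ :=
    rpow_neg_one_div_natCast_pow r.cast_nonneg (Nat.one_le_iff_ne_zero.1 hs)
  have hr₀ : (r : ℝ) ≠ 0 := by rw [hr]; positivity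
  have hs_eq : (s : ℝ) = r - 1 := by simp [hr]
  rw [eulerOp_iterate_four_pow, hx, hs_eq]
  · field_simp
    ring
  · rw [hx]
    field_simp
    ring
  · rw [hx, hs_eq, div_eq_mul_inv]
end
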